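/- Every root r of L with ht(r) ≤ 1 is a unit multiple of one of the 14 roots of the diagram D; in particular the 14 roots of D are, up to unit multiples, the only roots of height 1, and all other roots of L have height strictly greater than 1. -/

import Mathlib

/- Formalization over the ring ℋ of Hurwitz integers inside the real quaternions. -/

noncomputable section
open Quaternion Finset

/-- The real quaternions ℍ. -/
abbrev Quat := Quaternion ℝ

/-- The quaternion `i`. -/
def qi : Quat := ⟨0, 1, 0, 0⟩
/-- The quaternion `j`. -/
def qj : Quat := ⟨0, 0, 1, 0⟩
/-- The quaternion `k`. -/
def qk : Quat := ⟨0, 0, 0, 1⟩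
/-- `p = 1 - i`. -/
def qp : Quat := 1 - qi

/-- A quaternion is a Hurwitz integer if it is `(a+bi+cj+dk)/2` with
`a,b,c,d` integers which are all congruent mod `2`. -/
def IsHurwitz (q : Quat) : Prop :=
  ∃ a b c d : ℤ, a % 2 = b % 2 ∧ b % 2 = c % 2 ∧ c % 2 = d % 2 ∧
    q = ⟨(a : ℝ) / 2, (b : ℝ) / 2, (c : ℝ) / 2, (d : ℝ) / 2⟩

/-- A unit of the ring ℋ of Hurwitz integers. -/
def IsUnitH (q : Quat) : Prop :=
  IsHurwitz q ∧ ∃ r : Quat, IsHurwitz r ∧ q * r = 1 ∧ r * q = 1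

/-- Membership in the (two-sided) ideal `pℋ`. -/
def InPH (q : Quat) : Prop := ∃ h : Quat, IsHurwitz h ∧ q = qp * h

/-- The ambient space of the lattice `L = 3E₈ ⊕ H`: three pairs (the `E₈` summands)
together with the two coordinates of the hyperbolic cell `H`. -/
abbrev V3 : Type := (Fin 3 → Quat × Quat) × Quat × Quat

/-- The ℋ-valued form on `3E₈ ⊕ H`:  negative definite standard form on each `E₈`
summand and the hyperbolic form `⟨(x₁,x₂),(y₁,y₂)⟩ = x̄₁ p̄ y₂ + x̄₂ p y₁` on `H`. -/
def ip3 (x y : V3) : Quat :=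
  (∑ s : Fin 3, (-(star (x.1 s).1 * (y.1 s).1) - star (x.1 s).2 * (y.1 s).2))
    + star x.2.1 * star qp * y.2.2 + star x.2.2 * qp * y.2.1

/-- Membership in the `E₈` lattice: both coordinates Hurwitz and congruent mod `pℋ`. -/
def memE8 (q : Quat × Quat) : Prop := IsHurwitz q.1 ∧ IsHurwitz q.2 ∧ InPH (q.1 - q.2)

/-- Membership in the lattice `L = 3E₈ ⊕ H`. -/
def memL3 (v : V3) : Prop := (∀ s, memE8 (v.1 s)) ∧ IsHurwitz v.2.1 ∧ IsHurwitz v.2.2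

/-- Right scalar multiplication on the ambient space of `3E₈ ⊕ H`. -/
def rmul3 (v : V3) (q : Quat) : V3 :=
  (fun s => ((v.1 s).1 * q, (v.1 s).2 * q), v.2.1 * q, v.2.2 * q)

/-- The `μ`-reflection in a root `r` : `v ↦ v − r(1−μ)⟨r,v⟩/|r|²`. -/
def refl3 (r : V3) (μ : Quat) (v : V3) : V3 := v - rmul3 r ((1 - μ) * ip3 r v / ip3 r r)

/-- The root `a` of the diagram `D`. -/
def rootA : V3 := (fun _ => (0, 0), 1, -1)
/-- The roots `c_s` of the diagram `D`. -/
def rootC (s : Fin 3) : V3 := (fun t => if t = s then ((1 : Quat), (-1 : Quat)) else 0, 0, 0)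
/-- The roots `e_s` of the diagram `D` (with `(1,1)` in the two other `E₈` slots). -/
def rootE (s : Fin 3) : V3 := (fun t => if t = s then (0 : Quat × Quat) else (1, 1), -qi, -1)
/-- The root `f` of the diagram `D`. -/
def rootF : V3 := (fun _ => (0, qp), -(qi * qp), -qp)
/-- The roots `b_s` of the diagram `D`. -/
def rootB (s : Fin 3) : V3 := (fun t => if t = s then ((0 : Quat), qp) else 0, -1, 0)
/-- The roots `d_s` of the diagram `D`. -/
def rootD (s : Fin 3) : V3 := (fun t => if t = s then (-qp, (0 : Quat)) else 0, 0, 0)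

/-- The set of roots of `L`. -/
def Roots3 : Set V3 := {r | memL3 r ∧ ip3 r r = -2}

/-- The reflection group `R(L)` of `L = 3E₈ ⊕ H`, as the subgroup of permutations of the
ambient space generated by the `μ`-reflections in all roots of `L` (for all units `μ ≠ 1`). -/
def RL3 : Subgroup (Equiv.Perm V3) :=
  Subgroup.closure {g | ∃ r μ, r ∈ Roots3 ∧ IsUnitH μ ∧ μ ≠ 1 ∧ ∀ v, g v = refl3 r μ v}

/-- The seven `points` of the diagram `D`. -/
def Pt : Fin 7 → V3 := ![rootA, rootC 0, rootC 1, rootC 2, rootE 0, rootE 1, rootE 2]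
/-- The seven `lines` of the diagram `D`. -/
def Ln : Fin 7 → V3 := ![rootF, rootB 0, rootB 1, rootB 2, rootD 0, rootD 1, rootD 2]

/-- `ξ = (1+i)/√2`. -/
def xi : Quat := (1 + qi) * ((Real.sqrt 2 : ℝ) : Quat)⁻¹

/-- `(ρ₁,…,ρ₁₄) = (x₁,…,x₇, l₁ξ,…,l₇ξ)`. -/
def rho : Fin 14 → V3 := fun t =>
  if h : (t : ℕ) < 7 then Pt ⟨t, h⟩ else rmul3 (Ln ⟨(t : ℕ) - 7, by omega⟩) xi

/-- The Weyl vector `ρ̄ = (ρ₁ + … + ρ₁₄)/14`. -/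
def rhobar : V3 := (14 : ℝ)⁻¹ • (∑ t : Fin 14, rho t)

/-- The 14 roots of the diagram `D`: the seven points followed by the seven lines. -/
def root14 : Fin 14 → V3 := fun t =>
  if h : (t : ℕ) < 7 then Pt ⟨t, h⟩ else Ln ⟨(t : ℕ) - 7, by omega⟩

/-- The height of a root: `ht(r) = |⟨ρ̄,r⟩| / |ρ̄|²`. -/
def ht3 (r : V3) : ℝ := ‖ip3 rhobar r‖ / (ip3 rhobar rhobar).re

/-- The quaternion with given components. -/
def mk4 (a b c d : ℝ) : Quat := ⟨a, b, c, d⟩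

lemma mk4_re (a b c d : ℝ) : (mk4 a b c d).re = a := rfl
lemma mk4_imI (a b c d : ℝ) : (mk4 a b c d).imI = b := rfl
lemma mk4_imJ (a b c d : ℝ) : (mk4 a b c d).imJ = c := rfl
lemma mk4_imK (a b c d : ℝ) : (mk4 a b c d).imK = d := rfl
lemma qi_eq : qi = mk4 0 1 0 0 := rfl
lemma qp_eq : qp = mk4 1 (-1) 0 0 := by
  ext <;> simp [qp, qi_eq, mk4_re, mk4_imI, mk4_imJ, mk4_imK]

/-- `p̄ q / 2`. -/
def hp (q : Quat) : Quat := ((1 / 2 : ℝ)) • (q + qi * q)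

/-- `p⁻¹⟨x, r⟩` for the seven points `x`. -/
def al (r : V3) : Fin 7 → Quat :=
  ![qi * r.2.2 - r.2.1,
    -hp ((r.1 0).1 - (r.1 0).2), -hp ((r.1 1).1 - (r.1 1).2), -hp ((r.1 2).1 - (r.1 2).2),
    -hp ((r.1 1).1 + (r.1 1).2 + (r.1 2).1 + (r.1 2).2) - r.2.2 - r.2.1,
    -hp ((r.1 2).1 + (r.1 2).2 + (r.1 0).1 + (r.1 0).2) - r.2.2 - r.2.1,
    -hp ((r.1 0).1 + (r.1 0).2 + (r.1 1).1 + (r.1 1).2) - r.2.2 - r.2.1]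

/-- The product with the norm-one vector orthogonal to all points. -/
def mm (r : V3) : Quat :=
  -hp ((r.1 0).1 + (r.1 0).2 + (r.1 1).1 + (r.1 1).2 + (r.1 2).1 + (r.1 2).2)
    - r.2.1 - r.2.1 - r.2.2 - r.2.2

/-- The lines of the Fano plane. -/
def fano : Fin 7 → Finset (Fin 7) :=
  ![{1, 2, 3}, {0, 1, 4}, {0, 2, 5}, {0, 3, 6}, {1, 5, 6}, {2, 4, 6}, {3, 4, 5}]

lemma hp_re (q : Quat) : (hp q).re = (q.re - q.imI) / 2 := by simp [hp, qi_eq, mk4_re, mk4_imI, mk4_imJ, mk4_imK]; ring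
lemma hp_imI (q : Quat) : (hp q).imI = (q.imI + q.re) / 2 := by simp [hp, qi_eq, mk4_re, mk4_imI, mk4_imJ, mk4_imK]; ring
lemma hp_imJ (q : Quat) : (hp q).imJ = (q.imJ - q.imK) / 2 := by simp [hp, qi_eq, mk4_re, mk4_imI, mk4_imJ, mk4_imK]; ring
lemma hp_imK (q : Quat) : (hp q).imK = (q.imK + q.imJ) / 2 := by simp [hp, qi_eq, mk4_re, mk4_imI, mk4_imJ, mk4_imK]; ring

lemma norm_identity (r : V3) :
    (ip3 r r).re = normSq (mm r) - ∑ i, normSq (al r i) := by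
  obtain ⟨l, μ, ν⟩ := r
  simp [ip3, Fin.sum_univ_succ, normSq_def', mm, al, hp_re, hp_imI, hp_imJ, hp_imK, qp_eq, qi_eq, mk4_re, mk4_imI, mk4_imJ, mk4_imK]
  ring

lemma sq2 : Real.sqrt 2 * Real.sqrt 2 = 2 := Real.mul_self_sqrt (by norm_num)

lemma xi_eq : xi = mk4 (Real.sqrt 2 / 2) (Real.sqrt 2 / 2) 0 0 := by
  have h : (Real.sqrt 2)⁻¹ = Real.sqrt 2 / 2 := by
    have := sq2
    field_simp
    nlinarith
  rw [xi, ← Quaternion.coe_inv, h]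
  generalize Real.sqrt 2 / 2 = z
  ext <;> simp [qi_eq, mk4_re, mk4_imI, mk4_imJ, mk4_imK]

lemma rhobar_eq : rhobar =
    (fun _ => (mk4 ((3 - Real.sqrt 2) / 14) 0 0 0, mk4 ((1 + 2 * Real.sqrt 2) / 14) 0 0 0),
      mk4 ((1 - 3 * Real.sqrt 2 / 2) / 14) ((-3 - 5 * Real.sqrt 2 / 2) / 14) 0 0,
      mk4 ((-4 - Real.sqrt 2) / 14) 0 0 0) := by
  unfold rhobar
  have : (∑ t : Fin 14, rho t) = (∑ t, Pt t) + ∑ t, rmul3 (Ln t) xi := by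
    simp [Fin.sum_univ_succ, rho]
    abel
  rw [this, xi_eq]
  refine Prod.ext ?_ (Prod.ext ?_ ?_)
  · funext s
    fin_cases s <;> refine Prod.ext ?_ ?_ <;> 
    · simp [Fin.sum_univ_succ, Pt, Ln, rmul3, rootA, rootB, rootC, rootD, rootE, rootF]
      ext <;> simp [qp_eq, qi_eq, mk4_re, mk4_imI, mk4_imJ, mk4_imK] <;> ring
  · simp [Fin.sum_univ_succ, Pt, Ln, rmul3, rootA, rootB, rootC, rootD, rootE, rootF]
    ext <;> simp [qp_eq, qi_eq, mk4_re, mk4_imI, mk4_imJ, mk4_imK] <;> ring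
  · simp [Fin.sum_univ_succ, Pt, Ln, rmul3, rootA, rootB, rootC, rootD, rootE, rootF]
    ext <;> simp [qp_eq, qi_eq, mk4_re, mk4_imI, mk4_imJ, mk4_imK] <;> ring

lemma rho_norm : (ip3 rhobar rhobar).re = (3 * Real.sqrt 2 - 2) / 14 := by
  rw [rhobar_eq, ip3, Fin.sum_univ_three]
  simp [qp_eq, mk4_re, mk4_imI, mk4_imJ, mk4_imK]
  linear_combination (-1 / 28 : ℝ) * sq2

lemma rho_ip (r : V3) : ip3 rhobar r = mk4 (Real.sqrt 2 / 28) (-Real.sqrt 2 / 28) 0 0 *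
    ((7 : ℝ) • mm r - (3 - Real.sqrt 2 : ℝ) • ∑ i, al r i) := by
  rw [rhobar_eq]
  obtain ⟨l, μ, ν⟩ := r
  have := sq2
  ext 
  all_goals
    simp [ip3, Fin.sum_univ_succ, mm, al, hp_re, hp_imI, hp_imJ, hp_imK, qp_eq, qi_eq, mk4_re, mk4_imI, mk4_imJ, mk4_imK]
    ring_nf
    simp only [Real.sq_sqrt (show (0:ℝ) ≤ 2 by norm_num)]
    try ring

/-- The norm-one vector orthogonal to all points. -/
def rW : V3 := (fun _ => (mk4 (1 / 2) (-1 / 2) 0 0, mk4 (1 / 2) (-1 / 2) 0 0), mk4 (-1) (-1) 0 0,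
  mk4 (-1) 1 0 0)

set_option maxHeartbeats 4000000 in
lemma reconstruct (r : V3) :
    r = rmul3 rW (mm r) - ∑ i, rmul3 (Pt i) (mk4 (1 / 2) (-1 / 2) 0 0 * al r i) := by
  obtain ⟨l, μ, ν⟩ := r
  refine Prod.ext ?_ (Prod.ext ?_ ?_)
  · funext s
    fin_cases s <;> refine Prod.ext ?_ ?_ <;>
    · simp [Fin.sum_univ_succ, Pt, rmul3, rootA, rootC, rootE, rW]
      ext <;> simp [al, mm, hp_re, hp_imI, hp_imJ, hp_imK, qi_eq, mk4_re, mk4_imI, mk4_imJ,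
        mk4_imK] <;> ring
  · simp [Fin.sum_univ_succ, Pt, rmul3, rootA, rootC, rootE, rW]
    ext <;> simp [al, mm, hp_re, hp_imI, hp_imJ, hp_imK, qi_eq, mk4_re, mk4_imI, mk4_imJ,
        mk4_imK] <;> ring
  · simp [Fin.sum_univ_succ, Pt, rmul3, rootA, rootC, rootE, rW]
    ext <;> simp [al, mm, hp_re, hp_imI, hp_imJ, hp_imK, qi_eq, mk4_re, mk4_imI, mk4_imJ,
        mk4_imK] <;> ring

lemma hurwitz_iff (q : Quat) : IsHurwitz q ↔ ∃ a b c d : ℤ, a % 2 = b % 2 ∧ b % 2 = c % 2 ∧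
    c % 2 = d % 2 ∧ q.re = a / 2 ∧ q.imI = b / 2 ∧ q.imJ = c / 2 ∧ q.imK = d / 2 := by
  constructor
  · rintro ⟨a, b, c, d, h1, h2, h3, rfl⟩
    exact ⟨a, b, c, d, h1, h2, h3, rfl, rfl, rfl, rfl⟩
  · rintro ⟨a, b, c, d, h1, h2, h3, h4, h5, h6, h7⟩
    exact ⟨a, b, c, d, h1, h2, h3, by ext <;> assumption⟩

lemma hz_add {x y : Quat} (hx : IsHurwitz x) (hy : IsHurwitz y) : IsHurwitz (x + y) := by
  rw [hurwitz_iff] at *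
  obtain ⟨a, b, c, d, h1, h2, h3, h4, h5, h6, h7⟩ := hx
  obtain ⟨a', b', c', d', h1', h2', h3', h4', h5', h6', h7'⟩ := hy
  refine ⟨a + a', b + b', c + c', d + d', by omega, by omega, by omega, ?_, ?_, ?_, ?_⟩ <;>
  · simp [*]
    ring

lemma hz_neg {x : Quat} (hx : IsHurwitz x) : IsHurwitz (-x) := by
  rw [hurwitz_iff] at *
  obtain ⟨a, b, c, d, h1, h2, h3, h4, h5, h6, h7⟩ := hx
  refine ⟨-a, -b, -c, -d, by omega, by omega, by omega, ?_, ?_, ?_, ?_⟩ <;>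
  · simp [*]
    ring

lemma hz_star {x : Quat} (hx : IsHurwitz x) : IsHurwitz (star x) := by
  rw [hurwitz_iff] at *
  obtain ⟨a, b, c, d, h1, h2, h3, h4, h5, h6, h7⟩ := hx
  refine ⟨a, -b, -c, -d, by omega, by omega, by omega, ?_, ?_, ?_, ?_⟩
  · simp [*]
  all_goals
    simp [*]
    ring

lemma hz_sub {x y : Quat} (hx : IsHurwitz x) (hy : IsHurwitz y) : IsHurwitz (x - y) := by
  rw [sub_eq_add_neg]
  exact hz_add hx (hz_neg hy)

lemma hz_qi {x : Quat} (hx : IsHurwitz x) : IsHurwitz (qi * x) := by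
  rw [hurwitz_iff] at *
  obtain ⟨a, b, c, d, h1, h2, h3, h4, h5, h6, h7⟩ := hx
  refine ⟨-b, a, -d, c, by omega, by omega, by omega, ?_, ?_, ?_, ?_⟩ <;>
  · simp [*, qi_eq, mk4_re, mk4_imI, mk4_imJ, mk4_imK]
    try ring

lemma sq_mod4 (a : ℤ) : (a % 2 = 0 ∧ ∃ k, a = 2 * k) ∨ (a % 2 = 1 ∧ ∃ k, a * a = 8 * k + 1) := by
  rcases Int.even_or_odd' a with ⟨k, h | h⟩
  · exact Or.inl ⟨by omega, k, h⟩
  · rcases Int.even_or_odd' k with ⟨j, h' | h'⟩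
    · exact Or.inr ⟨by omega, 2 * j * j + j, by subst h' h; ring⟩
    · exact Or.inr ⟨by omega, 2 * j * j + 3 * j + 1, by subst h' h; ring⟩

lemma hz_norm {x : Quat} (hx : IsHurwitz x) : ∃ n : ℕ, normSq x = n := by
  rw [hurwitz_iff] at *
  obtain ⟨a, b, c, d, h1, h2, h3, h4, h5, h6, h7⟩ := hx
  have key : ∃ n : ℤ, a * a + b * b + c * c + d * d = 4 * n := by
    rcases sq_mod4 a with ⟨e1, k1, f1⟩ | ⟨e1, k1, f1⟩ <;>
    rcases sq_mod4 b with ⟨e2, k2, f2⟩ | ⟨e2, k2, f2⟩ <;>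
    rcases sq_mod4 c with ⟨e3, k3, f3⟩ | ⟨e3, k3, f3⟩ <;>
    rcases sq_mod4 d with ⟨e4, k4, f4⟩ | ⟨e4, k4, f4⟩ <;> try omega
    · exact ⟨k1 * k1 + k2 * k2 + k3 * k3 + k4 * k4, by subst f1 f2 f3 f4; ring⟩
    · exact ⟨2 * (k1 + k2 + k3 + k4) + 1, by linarith⟩
  obtain ⟨n, hn⟩ := key
  have hn0 : 0 ≤ n := by nlinarith [mul_self_nonneg a, mul_self_nonneg b, mul_self_nonneg c, mul_self_nonneg d]
  lift n to ℕ using hn0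
  refine ⟨n, ?_⟩
  rw [normSq_def', h4, h5, h6, h7]
  have : (a * a + b * b + c * c + d * d : ℝ) = 4 * n := by exact_mod_cast hn
  linarith

lemma hz_div {x : Quat} (hx : IsHurwitz x) (h : normSq x = 2) :
    IsHurwitz (mk4 (1 / 2) (-1 / 2) 0 0 * x) := by
  rw [hurwitz_iff] at *
  obtain ⟨a, b, c, d, h1, h2, h3, h4, h5, h6, h7⟩ := hx
  rw [normSq_def', h4, h5, h6, h7] at h
  have h8 : a * a + b * b + c * c + d * d = 8 := by
    have : (a * a + b * b + c * c + d * d : ℝ) = 8 := by linarith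
    exact_mod_cast this
  rcases sq_mod4 a with ⟨e1, k1, f1⟩ | ⟨e1, k1, f1⟩ <;>
  rcases sq_mod4 b with ⟨e2, k2, f2⟩ | ⟨e2, k2, f2⟩ <;>
  rcases sq_mod4 c with ⟨e3, k3, f3⟩ | ⟨e3, k3, f3⟩ <;>
  rcases sq_mod4 d with ⟨e4, k4, f4⟩ | ⟨e4, k4, f4⟩ <;> try omega
  have h9 : k1 * k1 + k2 * k2 + k3 * k3 + k4 * k4 = 2 := by subst f1 f2 f3 f4; linarith
  have p1 := Int.even_mul_succ_self k1
  have par : ∀ k : ℤ, (k * k) % 2 = k % 2 := by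
    intro k
    rcases Int.emod_two_eq_zero_or_one k with h | h <;> simp [Int.mul_emod, h]
  have q1 := par k1
  have q2 := par k2
  have q3 := par k3
  have q4 := par k4
  refine ⟨k1 + k2, k2 - k1, k3 + k4, k4 - k3, by omega, by omega, by omega, ?_, ?_, ?_, ?_⟩ <;>
  · subst f1 f2 f3 f4
    simp [h4, h5, h6, h7, mk4_re, mk4_imI, mk4_imJ, mk4_imK]
    ring

lemma unit_of_norm {x : Quat} (hx : IsHurwitz x) (h : normSq x = 1) : IsUnitH x := by
  refine ⟨hx, star x, hz_star hx, ?_, ?_⟩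
  · rw [Quaternion.self_mul_star, h]; simp
  · rw [Quaternion.star_mul_self, h]; simp

lemma norm_of_unit {x : Quat} (hx : IsUnitH x) : ‖x‖ = 1 := by
  obtain ⟨h1, r, h2, h3, -⟩ := hx
  obtain ⟨n, hn⟩ := hz_norm h1
  obtain ⟨k, hk⟩ := hz_norm h2
  have : normSq x * normSq r = 1 := by rw [← map_mul, h3, map_one]
  rw [hn, hk] at this
  have h4 : n * k = 1 := by exact_mod_cast this
  have h5 : n = 1 := Nat.eq_one_of_mul_eq_one_right h4
  rw [Quaternion.normSq_eq_norm_mul_self, h5] at hn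
  have := norm_nonneg x
  push_cast at hn
  nlinarith

lemma hp_add (x y : Quat) : hp (x + y) = hp x + hp y := by
  simp only [hp, mul_add, smul_add]; abel

lemma hp_sub_hz {v : Quat × Quat} (h : memE8 v) : IsHurwitz (hp (v.1 - v.2)) := by
  obtain ⟨h1, h2, z, hz, e⟩ := h
  have : hp (v.1 - v.2) = z := by
    rw [e]
    ext <;> simp [hp_re, hp_imI, hp_imJ, hp_imK, qp_eq, mk4_re, mk4_imI, mk4_imJ, mk4_imK] <;> ring
  rwa [this]

lemma hp_add_hz {v : Quat × Quat} (h : memE8 v) : IsHurwitz (hp (v.1 + v.2)) := by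
  have h1 := hp_sub_hz h
  have : hp (v.1 + v.2) = hp (v.1 - v.2) + v.2 + qi * v.2 := by
    ext <;> simp [hp_re, hp_imI, hp_imJ, hp_imK, qi_eq, mk4_re, mk4_imI, mk4_imJ, mk4_imK] <;> ring
  rw [this]
  exact hz_add (hz_add h1 h.2.1) (hz_qi h.2.1)

lemma mm_hz {r : V3} (h : memL3 r) : IsHurwitz (mm r) := by
  obtain ⟨h1, h2, h3⟩ := h
  have : mm r = -(hp ((r.1 0).1 + (r.1 0).2) + hp ((r.1 1).1 + (r.1 1).2)
      + hp ((r.1 2).1 + (r.1 2).2)) - r.2.1 - r.2.1 - r.2.2 - r.2.2 := by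
    simp only [mm, hp_add]; abel
  rw [this]
  exact hz_sub (hz_sub (hz_sub (hz_sub (hz_neg (hz_add (hz_add (hp_add_hz (h1 0))
    (hp_add_hz (h1 1))) (hp_add_hz (h1 2)))) h2) h2) h3) h3

lemma al_hz {r : V3} (h : memL3 r) (i : Fin 7) : IsHurwitz (al r i) := by
  obtain ⟨h1, h2, h3⟩ := h
  have key : ∀ s t : Fin 3, IsHurwitz
      (-hp ((r.1 s).1 + (r.1 s).2 + (r.1 t).1 + (r.1 t).2) - r.2.2 - r.2.1) := by
    intro s t
    rw [add_assoc ((r.1 s).1 + (r.1 s).2), hp_add]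
    exact hz_sub (hz_sub (hz_neg (hz_add (hp_add_hz (h1 s)) (hp_add_hz (h1 t)))) h3) h2
  fin_cases i
  · exact hz_sub (hz_qi h3) h2
  · exact hz_neg (hp_sub_hz (h1 0))
  · exact hz_neg (hp_sub_hz (h1 1))
  · exact hz_neg (hp_sub_hz (h1 2))
  · exact key 1 2
  · exact key 2 0
  · exact key 0 1

set_option maxHeartbeats 4000000 in
lemma line_hz {r : V3} (h : memL3 r) (l : Fin 7) :
    ∃ z, IsHurwitz z ∧ mm r - ∑ i ∈ fano l, al r i = z + qi * z := by
  obtain ⟨h1, h2, h3⟩ := h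
  have hy := fun s => (h1 s).2.1
  have hx := fun s => (h1 s).1
  fin_cases l
  · refine ⟨-((r.1 0).2 + (r.1 1).2 + (r.1 2).2) + qi * (r.2.2 + qi * r.2.2) - r.2.1 + qi * r.2.1,
      hz_add (hz_sub (hz_add (hz_neg (hz_add (hz_add (hy 0) (hy 1)) (hy 2)))
        (hz_qi (hz_add h3 (hz_qi h3)))) h2) (hz_qi h2), ?_⟩
    simp [fano, al]
    ext <;> simp [mm, hp_re, hp_imI, hp_imJ, hp_imK, qi_eq, mk4_re, mk4_imI, mk4_imJ, mk4_imK] <;> ring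
  · refine ⟨-((r.1 0).2 + r.2.2), hz_neg (hz_add (hy 0) h3), ?_⟩
    simp [fano, al]
    ext <;> simp [mm, hp_re, hp_imI, hp_imJ, hp_imK, qi_eq, mk4_re, mk4_imI, mk4_imJ, mk4_imK] <;> ring
  · refine ⟨-((r.1 1).2 + r.2.2), hz_neg (hz_add (hy 1) h3), ?_⟩
    simp [fano, al]
    ext <;> simp [mm, hp_re, hp_imI, hp_imJ, hp_imK, qi_eq, mk4_re, mk4_imI, mk4_imJ, mk4_imK] <;> ring
  · refine ⟨-((r.1 2).2 + r.2.2), hz_neg (hz_add (hy 2) h3), ?_⟩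
    simp [fano, al]
    ext <;> simp [mm, hp_re, hp_imI, hp_imJ, hp_imK, qi_eq, mk4_re, mk4_imI, mk4_imJ, mk4_imK] <;> ring
  · refine ⟨(r.1 0).1, hx 0, ?_⟩
    simp [fano, al]
    ext <;> simp [mm, hp_re, hp_imI, hp_imJ, hp_imK, qi_eq, mk4_re, mk4_imI, mk4_imJ, mk4_imK] <;> ring
  · refine ⟨(r.1 1).1, hx 1, ?_⟩
    simp [fano, al]
    ext <;> simp [mm, hp_re, hp_imI, hp_imJ, hp_imK, qi_eq, mk4_re, mk4_imI, mk4_imJ, mk4_imK] <;> ring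
  · refine ⟨(r.1 2).1, hx 2, ?_⟩
    simp [fano, al]
    ext <;> simp [mm, hp_re, hp_imI, hp_imJ, hp_imK, qi_eq, mk4_re, mk4_imI, mk4_imJ, mk4_imK] <;> ring

lemma line_even {r : V3} (h : memL3 r) (l : Fin 7) :
    ∃ n : ℕ, normSq (mm r - ∑ i ∈ fano l, al r i) = 2 * n := by
  obtain ⟨z, hz, e⟩ := line_hz h l
  obtain ⟨n, hn⟩ := hz_norm hz
  refine ⟨n, ?_⟩
  rw [e, ← hn, normSq_def', normSq_def']
  simp [qi_eq, mk4_re, mk4_imI, mk4_imJ, mk4_imK]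
  ring

set_option maxRecDepth 100000 in
set_option maxHeartbeats 4000000 in
lemma fano_two : ∀ T : Finset (Fin 7), T.card = 2 → ∃ l x, fano l ∩ T = {x} := by decide

set_option maxRecDepth 100000 in
set_option maxHeartbeats 4000000 in
lemma fano_three : ∀ T : Finset (Fin 7), T.card = 3 → (∀ l, (fano l ∩ T).card % 2 = 1) →
    ∃ l, T = fano l := by decide

lemma core (α : Fin 7 → Quat) (m : Quat) (hn : ∀ i, ∃ n : ℕ, normSq (α i) = n)
    (hm : ∃ n : ℕ, normSq m = n) (heq : normSq m + 2 = ∑ i, normSq (α i))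
    (hev : ∀ l, ∃ n : ℕ, normSq (m - ∑ i ∈ fano l, α i) = 2 * n)
    (hht : ‖(3 + Real.sqrt 2 : ℝ) • m - ∑ i, α i‖ ≤ Real.sqrt 2) :
    (m = 0 ∧ ∃ x, normSq (α x) = 2 ∧ ∀ y, y ≠ x → α y = 0) ∨
    (normSq m = 1 ∧ ∃ l, ∀ i, α i = if i ∈ fano l then m else 0) := by
  choose n hn using hn
  obtain ⟨N, hN⟩ := hm
  have hs2 := sq2
  have hs0 : 0 ≤ Real.sqrt 2 := Real.sqrt_nonneg 2
  have hs1 : 1.41 ≤ Real.sqrt 2 := by nlinarith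
  have hsum : N + 2 = ∑ i, n i := by
    simp only [hn, hN] at heq
    exact_mod_cast heq
  have nrm : ∀ i, ‖α i‖ * ‖α i‖ = n i := fun i => by
    rw [← Quaternion.normSq_eq_norm_mul_self, hn]
  have nrmm : ‖m‖ * ‖m‖ = N := by
    rw [← Quaternion.normSq_eq_norm_mul_self, hN]
  have hm0 := norm_nonneg m
  have tri : (3 + Real.sqrt 2) * ‖m‖ ≤ ‖∑ i, α i‖ + Real.sqrt 2 := by
    have h1 : ‖(3 + Real.sqrt 2 : ℝ) • m‖ = (3 + Real.sqrt 2) * ‖m‖ := by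
      rw [norm_smul, Real.norm_of_nonneg (by linarith)]
    have h2 := norm_le_norm_add_norm_sub' ((3 + Real.sqrt 2 : ℝ) • m) (∑ i, α i)
    linarith
  have hS : ‖∑ i, α i‖ ≤ ∑ i, ‖α i‖ := norm_sum_le _ _
  have hcs : (∑ i, ‖α i‖) ^ 2 ≤ 7 * (N + 2) := by
    have h := sq_sum_le_card_mul_sum_sq (s := (Finset.univ : Finset (Fin 7))) (f := fun i => ‖α i‖)
    simp only [pow_two, nrm] at h
    rw [pow_two]
    have h3 : (∑ i, (n i : ℝ)) = N + 2 := by exact_mod_cast hsum.symm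
    rw [h3] at h
    simpa using h
  have hN3 : N < 3 := by
    by_contra hc
    have hc' : (3 : ℝ) ≤ N := by exact_mod_cast not_lt.mp hc
    have ht : 1.7 ≤ ‖m‖ := by nlinarith
    have h4 : 0 ≤ (3 + Real.sqrt 2) * ‖m‖ - Real.sqrt 2 := by nlinarith
    have h5 : ((3 + Real.sqrt 2) * ‖m‖ - Real.sqrt 2) ^ 2 ≤ 7 * (N + 2) :=
      le_trans (pow_le_pow_left₀ h4 (by linarith) 2) hcs
    have h6 : (4 + 6 * Real.sqrt 2) * (‖m‖ * (‖m‖ - 1)) ≤ 12 := by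
      rw [← nrmm] at h5
      have : ((3 + Real.sqrt 2) * ‖m‖ - Real.sqrt 2) ^ 2 =
        (11 + 6 * Real.sqrt 2) * (‖m‖ * ‖m‖) - (6 * Real.sqrt 2 + 4) * ‖m‖ + 2 := by
        linear_combination (‖m‖ ^ 2 - 2 * ‖m‖ + 1) * hs2
      rw [this] at h5
      linarith
    have h7 : 1.19 ≤ ‖m‖ * (‖m‖ - 1) := by nlinarith
    nlinarith
  have hle : ∀ i, ‖α i‖ ≤ n i := by
    intro i
    have h1 := nrm i
    have h0 := norm_nonneg (α i)
    rcases Nat.eq_zero_or_pos (n i) with h | h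
    · rw [h] at h1 ⊢
      push_cast at *
      nlinarith
    · have : (1 : ℝ) ≤ n i := by exact_mod_cast h
      nlinarith
  have hSle : ‖∑ i, α i‖ ≤ N + 2 := by
    refine hS.trans ((Finset.sum_le_sum fun i _ => hle i).trans ?_)
    have h3 : (∑ i, (n i : ℝ)) = N + 2 := by exact_mod_cast hsum.symm
    exact h3.le
  interval_cases N
  · left
    have hm0 : m = 0 := by
      rw [← norm_eq_zero]
      simpa using nrmm
    have hz : ∀ i, n i = 0 → α i = 0 := by
      intro i h
      have := nrm i
      rw [← norm_eq_zero]
      simpa [h] using this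
    refine ⟨hm0, ?_⟩
    by_cases h2 : ∃ x, n x = 2
    · obtain ⟨x, hx⟩ := h2
      refine ⟨x, by rw [hn, hx]; norm_num, fun y hy => hz y ?_⟩
      have := Finset.add_sum_erase Finset.univ n (Finset.mem_univ x)
      have h4 : ∑ i ∈ Finset.univ.erase x, n i = 0 := by omega
      exact (Finset.sum_eq_zero_iff.mp h4) y (Finset.mem_erase.mpr ⟨hy, Finset.mem_univ _⟩)
    · exfalso
      push Not at h2
      have hle1 : ∀ i, n i ≤ 1 := by
        intro i
        have := Finset.single_le_sum (f := n) (fun j _ => Nat.zero_le _) (Finset.mem_univ i)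
        have := h2 i
        omega
      have hT : (Finset.univ.filter fun i => n i = 1).card = 2 := by
        rw [Finset.card_filter]
        rw [show (2 : ℕ) = ∑ i, n i by omega]
        refine Finset.sum_congr rfl fun i _ => ?_
        have := hle1 i
        split_ifs <;> omega
      obtain ⟨l, x, hlx⟩ := fano_two _ hT
      have hx : x ∈ fano l ∩ Finset.univ.filter fun i => n i = 1 := by rw [hlx]; simp
      have hxl := (Finset.mem_inter.mp hx).1
      have hx1 : n x = 1 := by simpa using (Finset.mem_inter.mp hx).2
      have hsx : ∑ i ∈ fano l, α i = α x := by
        refine Finset.sum_eq_single x (fun y hy hyx => hz y ?_) (fun h => absurd hxl h)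
        have := hle1 y
        by_contra hc
        have : y ∈ fano l ∩ Finset.univ.filter fun i => n i = 1 := by
          refine Finset.mem_inter.mpr ⟨hy, ?_⟩
          simp; omega
        rw [hlx] at this
        exact hyx (by simpa using this)
      obtain ⟨k, hk⟩ := hev l
      rw [hsx, hm0, zero_sub, normSq_neg, hn, hx1] at hk
      have : 1 = 2 * k := by exact_mod_cast hk
      omega
  · right
    refine ⟨by rw [hN]; norm_num, ?_⟩
    have hm1 : ‖m‖ = 1 := by
      push_cast at nrmm
      nlinarith
    have hS3 : 3 ≤ ‖∑ i, α i‖ := by rw [hm1] at tri; linarith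
    have hin : 3 ≤ inner ℝ m (∑ i, α i) := by
      have h1 := norm_sub_sq_real ((3 + Real.sqrt 2 : ℝ) • m) (∑ i, α i)
      have h2 : ‖(3 + Real.sqrt 2 : ℝ) • m‖ = (3 + Real.sqrt 2) := by
        rw [norm_smul, Real.norm_of_nonneg (by linarith), hm1, mul_one]
      rw [h2, real_inner_smul_left] at h1
      have h3 : ‖(3 + Real.sqrt 2 : ℝ) • m - ∑ i, α i‖ ^ 2 ≤ 2 := by
        have := pow_le_pow_left₀ (norm_nonneg _) hht 2
        nlinarith
      rw [h1] at h3
      have h4 : (3 + Real.sqrt 2) * 3 ≤ (3 + Real.sqrt 2) * inner ℝ m (∑ i, α i) := by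
        nlinarith
      exact le_of_mul_le_mul_left h4 (by linarith)
    rw [inner_sum] at hin
    have hi1 : ∀ i, inner ℝ m (α i) ≤ n i := fun i => by
      have := real_inner_le_norm m (α i)
      rw [hm1, one_mul] at this
      exact this.trans (hle i)
    have h3 : (∑ i, (n i : ℝ)) = 3 := by
      have : ∑ i, n i = 3 := by omega
      exact_mod_cast this
    have hieq : ∀ i, inner ℝ m (α i) = n i := by
      have h5 : ∑ i, inner ℝ m (α i) = ∑ i, (n i : ℝ) :=
        le_antisymm (Finset.sum_le_sum fun i _ => hi1 i) (by rw [h3]; exact hin)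
      intro i
      exact (Finset.sum_eq_sum_iff_of_le fun i _ => hi1 i).mp h5 i (Finset.mem_univ i)
    have hle1 : ∀ i, n i ≤ 1 := by
      intro i
      have h5 := real_inner_le_norm m (α i)
      rw [hieq, hm1, one_mul] at h5
      have h6 : (n i : ℝ) * n i ≤ n i := by
        rw [← nrm i]
        have := hle i
        rw [nrm i]
        calc (n i : ℝ) * n i ≤ ‖α i‖ * ‖α i‖ := mul_self_le_mul_self (Nat.cast_nonneg _) h5
          _ = n i := nrm i
      have h7 : n i * n i ≤ n i := by exact_mod_cast h6
      by_contra hc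
      nlinarith
    have hα : ∀ i, α i = (n i : ℝ) • m := by
      intro i
      have h1 := norm_sub_sq_real (α i) ((n i : ℝ) • m)
      rw [real_inner_smul_right, real_inner_comm, hieq, norm_smul, hm1, mul_one,
        Real.norm_of_nonneg (Nat.cast_nonneg _), pow_two ‖α i‖, nrm] at h1
      have : n i = 0 ∨ n i = 1 := by have := hle1 i; omega
      have h2 : ‖α i - (n i : ℝ) • m‖ ^ 2 = 0 := by
        rw [h1]
        rcases this with h | h <;> rw [h] <;> norm_num
      rw [← sub_eq_zero, ← norm_eq_zero]
      exact pow_eq_zero_iff (two_ne_zero) |>.mp h2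
    have hT : (Finset.univ.filter fun i => n i = 1).card = 3 := by
      rw [Finset.card_filter]
      rw [show (3 : ℕ) = ∑ i, n i by omega]
      refine Finset.sum_congr rfl fun i _ => ?_
      have := hle1 i
      split_ifs <;> omega
    obtain ⟨l, hl⟩ := fano_three _ hT (by
      intro l
      obtain ⟨k, hk⟩ := hev l
      have e1 : ∑ i ∈ fano l, α i =
          ((fano l ∩ Finset.univ.filter fun i => n i = 1).card : ℝ) • m := by
        rw [Finset.sum_congr rfl fun i _ => hα i, ← Finset.sum_smul]
        congr 1
        rw [Finset.inter_filter, Finset.inter_univ, Finset.card_filter]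
        push_cast
        refine Finset.sum_congr rfl fun i _ => ?_
        have : n i = 0 ∨ n i = 1 := by have := hle1 i; omega
        rcases this with h | h <;> simp [h]
      generalize (fano l ∩ Finset.univ.filter fun i => n i = 1).card = c at *
      rw [e1, show m - (c : ℝ) • m = (1 - c : ℝ) • m by rw [sub_smul, one_smul],
        Quaternion.normSq_smul, hN] at hk
      have hk' : ((1 : ℤ) - c) ^ 2 = 2 * k := by
        have : ((1 : ℝ) - c) ^ 2 = 2 * k := by simpa using hk
        exact_mod_cast this
      have h1 : Even (((1 : ℤ) - c) ^ 2) := ⟨k, by rw [hk']; ring⟩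
      have h2 : Even ((1 : ℤ) - c) := by
        rwa [Int.even_pow' two_ne_zero] at h1
      obtain ⟨j, hj⟩ := h2
      omega)
    refine ⟨l, fun i => ?_⟩
    rw [hα i, ← hl]
    have : n i = 0 ∨ n i = 1 := by have := hle1 i; omega
    rcases this with h | h <;> simp [h]
  · exfalso
    have : ‖m‖ = Real.sqrt 2 := by
      have h1 : ‖m‖ * ‖m‖ = 2 := by simpa using nrmm
      rw [← h1, Real.sqrt_mul_self hm0]
    rw [this] at tri
    push_cast at hSle
    nlinarith

lemma ht_formula (r : V3) : ht3 r =
    ‖(7 : ℝ) • mm r - (3 - Real.sqrt 2 : ℝ) • ∑ i, al r i‖ / (3 * Real.sqrt 2 - 2) := by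
  have hs2 := sq2
  have hs0 : 0 ≤ Real.sqrt 2 := Real.sqrt_nonneg 2
  have hs1 : 1.41 ≤ Real.sqrt 2 := by nlinarith
  have h1 : ‖mk4 (Real.sqrt 2 / 28) (-Real.sqrt 2 / 28) 0 0‖ = 1 / 14 := by
    have h := Quaternion.normSq_eq_norm_mul_self (mk4 (Real.sqrt 2 / 28) (-Real.sqrt 2 / 28) 0 0)
    rw [normSq_def', mk4_re, mk4_imI, mk4_imJ, mk4_imK] at h
    have h0 := norm_nonneg (mk4 (Real.sqrt 2 / 28) (-Real.sqrt 2 / 28) 0 0)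
    have h2 : ‖mk4 (Real.sqrt 2 / 28) (-Real.sqrt 2 / 28) 0 0‖ ^ 2 = (1 / 14) ^ 2 := by
      linear_combination -h + (1 / 392 : ℝ) * hs2
    exact (pow_left_inj₀ h0 (by norm_num) two_ne_zero).mp h2
  have h3 : (3 * Real.sqrt 2 - 2) ≠ 0 := by linarith
  rw [ht3, rho_norm, rho_ip, norm_mul, h1]
  field_simp

lemma ht_core {r : V3} (h : ht3 r ≤ 1) :
    ‖(3 + Real.sqrt 2 : ℝ) • mm r - ∑ i, al r i‖ ≤ Real.sqrt 2 := by
  have hs2 := sq2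
  have hs0 : 0 ≤ Real.sqrt 2 := Real.sqrt_nonneg 2
  have hs1 : 1.41 ≤ Real.sqrt 2 := by nlinarith
  have hs3 : Real.sqrt 2 ≤ 2 := by nlinarith
  rw [ht_formula, div_le_one (by linarith)] at h
  have e : (7 : ℝ) • mm r - (3 - Real.sqrt 2 : ℝ) • ∑ i, al r i =
      (3 - Real.sqrt 2 : ℝ) • ((3 + Real.sqrt 2 : ℝ) • mm r - ∑ i, al r i) := by
    rw [smul_sub, smul_smul]
    congr 2
    linear_combination hs2
  rw [e, norm_smul, Real.norm_of_nonneg (by linarith)] at h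
  have h2 : (3 - Real.sqrt 2) * ‖(3 + Real.sqrt 2 : ℝ) • mm r - ∑ i, al r i‖ ≤
      (3 - Real.sqrt 2) * Real.sqrt 2 := by
    refine h.trans (le_of_eq ?_)
    linear_combination hs2
  exact le_of_mul_le_mul_left h2 (by linarith)

lemma ht_rmul (r : V3) (u : Quat) : ht3 (rmul3 r u) = ht3 r * ‖u‖ := by
  have : ip3 rhobar (rmul3 r u) = ip3 rhobar r * u := by
    simp only [ip3, rmul3, Fin.sum_univ_three]
    noncomm_ring
  rw [ht3, ht3, this, norm_mul]
  ring

set_option maxHeartbeats 4000000 in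
lemma pt_data (x : Fin 7) : mm (Pt x) = 0 ∧ ∑ i, al (Pt x) i = mk4 (-1) (-1) 0 0 := by
  fin_cases x <;> refine ⟨?_, ?_⟩ <;>
  · simp [Fin.sum_univ_succ, Pt, rootA, rootC, rootE, al, mm]
    ext <;> simp [hp_re, hp_imI, hp_imJ, hp_imK, qi_eq, mk4_re, mk4_imI, mk4_imJ, mk4_imK] <;>
      norm_num

set_option maxHeartbeats 4000000 in
lemma ln_data (x : Fin 7) : mm (Ln x) = mk4 1 0 0 0 ∧ ∑ i, al (Ln x) i = mk4 3 0 0 0 := by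
  fin_cases x <;> refine ⟨?_, ?_⟩ <;>
  · simp [Fin.sum_univ_succ, Ln, rootB, rootD, rootF, al, mm]
    ext <;> simp [hp_re, hp_imI, hp_imJ, hp_imK, qp_eq, qi_eq, mk4_re, mk4_imI, mk4_imJ, mk4_imK]
      <;> norm_num

lemma norm_of_sq {q : Quat} {a : ℝ} (ha : 0 ≤ a) (h : normSq q = a ^ 2) : ‖q‖ = a := by
  rw [Quaternion.normSq_eq_norm_mul_self, ← pow_two] at h
  exact (pow_left_inj₀ (norm_nonneg _) ha two_ne_zero).mp h

lemma ht_pt (x : Fin 7) : ht3 (Pt x) = 1 := by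
  have hs2 := sq2
  have hs0 : 0 ≤ Real.sqrt 2 := Real.sqrt_nonneg 2
  have hs1 : 1.41 ≤ Real.sqrt 2 := by nlinarith
  rw [ht_formula, (pt_data x).1, (pt_data x).2, norm_of_sq (a := 3 * Real.sqrt 2 - 2) (by linarith),
    div_self (by linarith)]
  rw [normSq_def']
  simp [mk4_re, mk4_imI, mk4_imJ, mk4_imK]
  linear_combination (-7 : ℝ) * hs2

lemma ht_ln (x : Fin 7) : ht3 (Ln x) = 1 := by
  have hs2 := sq2
  have hs0 : 0 ≤ Real.sqrt 2 := Real.sqrt_nonneg 2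
  have hs1 : 1.41 ≤ Real.sqrt 2 := by nlinarith
  rw [ht_formula, (ln_data x).1, (ln_data x).2, norm_of_sq (a := 3 * Real.sqrt 2 - 2) (by linarith),
    div_self (by linarith)]
  rw [normSq_def']
  simp [mk4_re, mk4_imI, mk4_imJ, mk4_imK]
  ring

lemma ht_root14 (t : Fin 14) : ht3 (root14 t) = 1 := by
  unfold root14
  split_ifs
  · exact ht_pt _
  · exact ht_ln _

lemma root14_pt (x : Fin 7) : ∃ t, root14 t = Pt x :=
  ⟨⟨x, by omega⟩, by simp [root14]⟩

lemma root14_ln (x : Fin 7) : ∃ t, root14 t = Ln x :=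
  ⟨⟨x + 7, by omega⟩, by simp [root14]⟩

set_option maxHeartbeats 4000000 in
lemma line_vec (l : Fin 7) (m : Quat) :
    rmul3 rW m - ∑ i, rmul3 (Pt i) (mk4 (1 / 2) (-1 / 2) 0 0 * if i ∈ fano l then m else 0) =
      rmul3 (Ln l) m := by
  fin_cases l <;>
  · simp [fano, Fin.sum_univ_succ]
    refine Prod.ext ?_ (Prod.ext ?_ ?_)
    · funext s
      fin_cases s <;> refine Prod.ext ?_ ?_ <;>
      · simp [Pt, Ln, rmul3, rootA, rootB, rootC, rootD, rootE, rootF, rW]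
        try (ext <;> simp [qp_eq, qi_eq, mk4_re, mk4_imI, mk4_imJ, mk4_imK] <;> ring)
    · simp [Pt, Ln, rmul3, rootA, rootB, rootC, rootD, rootE, rootF, rW]
      try (ext <;> simp [qp_eq, qi_eq, mk4_re, mk4_imI, mk4_imJ, mk4_imK] <;> ring)
    · simp [Pt, Ln, rmul3, rootA, rootB, rootC, rootD, rootE, rootF, rW]
      try (ext <;> simp [qp_eq, qi_eq, mk4_re, mk4_imI, mk4_imJ, mk4_imK] <;> ring)

lemma rmul3_zero (v : V3) : rmul3 v 0 = 0 := by
  simp only [rmul3, mul_zero]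
  rfl

lemma rmul3_neg (v : V3) (q : Quat) : rmul3 v (-q) = -rmul3 v q := by
  simp only [rmul3, mul_neg]
  rfl

lemma main_part (r : V3) (hL : memL3 r) (hr : ip3 r r = -2) (hh : ht3 r ≤ 1) :
    ∃ (t : Fin 14) (u : Quat), IsUnitH u ∧ r = rmul3 (root14 t) u := by
  have hre : (ip3 r r).re = -2 := by
    rw [hr, Quaternion.re_neg, show (2 : Quat) = 1 + 1 by norm_num, Quaternion.re_add,
      Quaternion.re_one]
    norm_num
  rw [norm_identity] at hre
  have hrec := reconstruct r
  rcases core (al r) (mm r) (fun i => hz_norm (al_hz hL i)) (hz_norm (mm_hz hL)) (by linarith)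
    (line_even hL) (ht_core hh) with ⟨hm, x, hx, hy⟩ | ⟨hm, l, hl⟩
  · obtain ⟨t, ht⟩ := root14_pt x
    refine ⟨t, -(mk4 (1 / 2) (-1 / 2) 0 0 * al r x), ?_, ?_⟩
    · refine unit_of_norm (hz_neg (hz_div (al_hz hL x) hx)) ?_
      rw [normSq_neg, map_mul, hx, normSq_def', mk4_re, mk4_imI, mk4_imJ, mk4_imK]
      norm_num
    · rw [ht, rmul3_neg]
      rw [hm, rmul3_zero, zero_sub, Finset.sum_eq_single x] at hrec
      · exact hrec
      · intro y _ hyx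
        rw [hy y hyx, mul_zero, rmul3_zero]
      · intro h
        exact absurd (Finset.mem_univ x) h
  · obtain ⟨t, ht⟩ := root14_ln l
    refine ⟨t, mm r, unit_of_norm (mm_hz hL) hm, ?_⟩
    rw [ht, ← line_vec]
    simp only [hl] at hrec
    exact hrec

/-- Every root `r` of `L` with `ht(r) ≤ 1` is a unit multiple of one of
the 14 roots of the diagram `D`; all unit multiples of the 14 roots have height exactly 1,
and every other root has height strictly greater than 1. -/
theorem roots_of_minimal_height :
    (∀ r, memL3 r → ip3 r r = -2 → ht3 r ≤ 1 →
      ∃ (t : Fin 14) (u : Quat), IsUnitH u ∧ r = rmul3 (root14 t) u) ∧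
    (∀ (t : Fin 14) (u : Quat), IsUnitH u → ht3 (rmul3 (root14 t) u) = 1) ∧
    (∀ r, memL3 r → ip3 r r = -2 →
      (¬ ∃ (t : Fin 14) (u : Quat), IsUnitH u ∧ r = rmul3 (root14 t) u) → 1 < ht3 r) := by
  refine ⟨main_part, fun t u hu => ?_, fun r hL hr hn => ?_⟩
  · rw [ht_rmul, ht_root14, norm_of_unit hu, one_mul]
  · by_contra hc
    exact hn (main_part r hL hr (not_lt.mp hc))
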